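/- Let f : X → Y be a map between two metric spaces and let C₀, C₁, C₂, … be closed subsets of X. Suppose that: (1) X = ⋃ᵢ Cᵢ; (2) C₀ ∩ Cᵢ ≠ ∅ for all i; (3) diam(Cᵢ) → 0 as i → ∞; (4) diam(f(Cᵢ)) → 0 as i → ∞; and (5) the restriction of f to each Cᵢ is continuous. Then f is continuous. -/

import Mathlib

open Set Filter Topology

/-- A function continuous on a closed set `s` has values close to `f x` at the points of `s` near
`x`, whether or not `x` lies in `s`. -/
lemma ContinuousOn.eventually_mem_imp_edist_lt {X Y : Type*} [TopologicalSpace X]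
    [PseudoEMetricSpace Y] {f : X → Y} {s : Set X} (hf : ContinuousOn f s) (hs : IsClosed s)
    (x : X) {ε : ENNReal} (hε : 0 < ε) :
    ∀ᶠ y in 𝓝 x, y ∈ s → edist (f y) (f x) < ε := by
  by_cases hx : x ∈ s
  · exact eventually_nhdsWithin_iff.1 ((hf x hx).eventually (Metric.eball_mem_nhds (f x) hε))
  · filter_upwards [hs.isOpen_compl.mem_nhds hx] with y hy hys
    exact absurd hys hy

theorem stmt5 {X Y : Type*} [MetricSpace X] [MetricSpace Y]
    (f : X → Y) (C : ℕ → Set X)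
    (hclosed : ∀ i, IsClosed (C i))
    (hunion : (⋃ i, C i) = Set.univ)
    (hmeet : ∀ i, (C 0 ∩ C i).Nonempty)
    (hdiam : Tendsto (fun i => EMetric.diam (C i)) atTop (𝓝 0))
    (hdiamf : Tendsto (fun i => EMetric.diam (f '' C i)) atTop (𝓝 0))
    (hcont : ∀ i, ContinuousOn f (C i)) :
    Continuous f := by
  refine continuous_iff_continuousAt.2 fun x => EMetric.tendsto_nhds.2 fun ε hε => ?_
  have hε2 : 0 < ε / 2 := ENNReal.half_pos hε.ne'
  obtain ⟨δ, hδ, hC0⟩ := EMetric.mem_nhds_iff.1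
    ((hcont 0).eventually_mem_imp_edist_lt (hclosed 0) x hε2)
  have hδ2 : 0 < δ / 2 := ENNReal.half_pos hδ.ne'
  obtain ⟨N, hN⟩ := eventually_atTop.1
    ((hdiam.eventually_lt_const hδ2).and (hdiamf.eventually_lt_const hε2))
  have hsmall : ∀ᶠ y in 𝓝 x, ∀ i ∈ Iio N, y ∈ C i → edist (f y) (f x) < ε :=
    (eventually_all_finite (finite_Iio N)).2 fun i _ =>
      (hcont i).eventually_mem_imp_edist_lt (hclosed i) x hε
  filter_upwards [hsmall, Metric.eball_mem_nhds x hδ2] with y hy hyx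
  obtain ⟨i, hi⟩ := mem_iUnion.1 (hunion ▸ mem_univ y)
  rcases lt_or_ge i N with hiN | hiN
  · exact hy i hiN hi
  obtain ⟨p, hp0, hpi⟩ := hmeet i
  have hpy : edist p y < δ / 2 := (Metric.edist_le_ediam_of_mem hpi hi).trans_lt (hN i hiN).1
  have hpx : edist p x < δ := calc
    edist p x ≤ edist p y + edist y x := edist_triangle _ _ _
    _ < δ / 2 + δ / 2 := ENNReal.add_lt_add hpy hyx
    _ = δ := ENNReal.add_halves δ
  have hfyp : edist (f y) (f p) < ε / 2 :=
    (Metric.edist_le_ediam_of_mem (mem_image_of_mem f hi) (mem_image_of_mem f hpi)).trans_lt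
      (hN i hiN).2
  calc
    edist (f y) (f x) ≤ edist (f y) (f p) + edist (f p) (f x) := edist_triangle _ _ _
    _ < ε / 2 + ε / 2 := ENNReal.add_lt_add hfyp (hC0 hpx hp0)
    _ = ε := ENNReal.add_halves ε
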